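/- arXiv:1802.03507 — 2 statements merged into one kernel-verified Lean document; each statement's English description precedes it below -/
import Mathlib

section
/- Let q be a prime power and n a positive integer coprime to q. Then there exists a bijection Φ : N(n,q) → F(n,q) such that for every subset I ⊆ {1,...,m}, Φ restricts to a bijection from N_I onto F_I. -/
open Polynomial

/-- Two elements of a commutative monoid are rotation-equivalent w.r.t. `x` iff they lie
in the same orbit under multiplication by `x` (stated symmetrically so that it is an
equivalence relation). For `Q = F[X]/(X^n-1)` and `x` the image of `X` (a unit),
the classes are exactly the orbits `{α, Xα, …, X^{n-1}α}`, i.e. necklaces. -/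
def rotSetoid {R : Type*} [CommMonoid R] (x : R) : Setoid R where
  r a b := ∃ j k : ℕ, x ^ j * a = x ^ k * b
  iseqv := by
    refine ⟨fun a => ⟨0, 0, rfl⟩, ?_, ?_⟩
    · rintro a b ⟨j, k, h⟩
      exact ⟨k, j, h.symm⟩
    · rintro a b c ⟨j, k, h1⟩ ⟨j', k', h2⟩
      refine ⟨j' + j, k + k', ?_⟩
      rw [pow_add, mul_assoc, h1, ← mul_assoc, ← pow_add, add_comm j' k, pow_add,
        mul_assoc, h2, ← mul_assoc, ← pow_add]

/-- `Q = F[X]/(X^n - 1)`. -/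
abbrev Qring (F : Type) [Field F] (n : ℕ) := AdjoinRoot ((X : F[X]) ^ n - 1)

/-- The image of `X` in `Q`. -/
noncomputable def Xbar (F : Type) [Field F] (n : ℕ) : Qring F n := AdjoinRoot.root _

/-- The image in `Q` of the minimal polynomial over `F` of an element `x` of the
algebraic closure of `F`; for `x = ω^{s_i}` this is the element `P_i` of `Q`. -/
noncomputable def Pbar (F : Type) [Field F] (n : ℕ) (x : AlgebraicClosure F) : Qring F n :=
  AdjoinRoot.mk _ (minpoly F x)

/-!
Evaluation at the `ω ^ s i` identifies `Q` with the product of the fields `K i = F⟮ω ^ s i⟯`, of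
cardinalities `q ^ ℓ i`, and turns divisibility by `P i` into the vanishing of the `i`-th component.
Hence `N_I` is the quotient of `∏ i ∈ I, (K i)ˣ` by the subgroup generated by the image
`(ω ^ s i)_{i ∈ I}` of `X`.

On the other side, the values of `f` along the `i`-th coset are the base `q` digits of a number
`a i < q ^ ℓ i`, and the weight `∑ z, z * f z` becomes `∑ i, a i * s i`. Since `a i = q ^ ℓ i - 1`
exactly when `f` is constantly `q - 1` on the coset, and `(q ^ ℓ i - 1) * s i = 0`, the set `F_I`
becomes the kernel of `∏ i ∈ I, ℤ/(q ^ ℓ i - 1) → ℤ/n`, `a ↦ ∑ i, a i * s i`.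

The group divided out on one side and the image of the homomorphism on the other both have as
cardinality the order of `(s i)_{i ∈ I}` in `(ℤ/n)^I`, because `ℤ/n` is cyclic. So
`|N_I| = |F_I|`, and as the `N_I` and the `F_I` are partitions, this is all that is needed.
-/

section Matching

lemma exists_bijective_bijOn_of_card_eq {A B J : Type*} [Finite A] [Finite B]
    (SA : J → Set A) (SB : J → Set B)
    (hA : ∀ a, ∃! I, a ∈ SA I) (hB : ∀ b, ∃! I, b ∈ SB I)
    (hcard : ∀ I, Nat.card (SA I) = Nat.card (SB I)) :
    ∃ Φ : A → B, Function.Bijective Φ ∧ ∀ I, Set.BijOn Φ (SA I) (SB I) := by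
  choose labelA memA uniqueA using hA
  choose labelB memB uniqueB using hB
  have mem_SA (I : J) (a : A) : labelA a = I ↔ a ∈ SA I :=
    ⟨fun h => h ▸ memA a, fun h => (uniqueA a I h).symm⟩
  have mem_SB (I : J) (b : B) : labelB b = I ↔ b ∈ SB I :=
    ⟨fun h => h ▸ memB b, fun h => (uniqueB b I h).symm⟩
  let fiberEquiv (I : J) : {a // labelA a = I} ≃ {b // labelB b = I} :=
    (Equiv.subtypeEquivRight (mem_SA I)).trans
      ((Finite.card_eq.1 (hcard I)).some.trans (Equiv.subtypeEquivRight (mem_SB I)).symm)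
  let Φ := Equiv.ofFiberEquiv fiberEquiv
  refine ⟨Φ, Φ.bijective, fun I => Φ.bijOn fun a => ?_⟩
  rw [← mem_SB, Equiv.ofFiberEquiv_map fiberEquiv, mem_SA]

lemma existsUnique_finset_forall_iff_notMem {ι : Type*} [Finite ι] (p : ι → Prop) :
    ∃! I : Finset ι, ∀ i, p i ↔ i ∉ I := by
  refine ⟨(Set.toFinite {i | ¬ p i}).toFinset, by simp, fun I hI => ?_⟩
  ext i
  simp [hI]

end Matching

section Rotation

variable {G M N : Type*} [CommGroup G] [CommMonoid M] [CommMonoid N]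

lemma rotSetoid_eq_leftRel (u : G) :
    rotSetoid u = QuotientGroup.leftRel (Subgroup.zpowers u) := by
  ext a b
  rw [QuotientGroup.leftRel_apply, Subgroup.mem_zpowers_iff]
  constructor
  · rintro ⟨j, k, h⟩
    refine ⟨(j : ℤ) - k, ?_⟩
    rw [zpow_sub, zpow_natCast, zpow_natCast, mul_inv_eq_iff_eq_mul, mul_assoc, mul_comm b, ← h,
      mul_left_comm, inv_mul_cancel, mul_one]
  · rintro ⟨z, hz⟩
    obtain ⟨j, k, rfl⟩ : ∃ j k : ℕ, z = j - k := ⟨z.toNat, (-z).toNat, by omega⟩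
    refine ⟨j, k, ?_⟩
    rw [zpow_sub, zpow_natCast, zpow_natCast, mul_inv_eq_iff_eq_mul] at hz
    rw [hz, mul_comm, mul_assoc, mul_inv_cancel_left, mul_comm]

lemma card_quotient_rotSetoid_mul_orderOf (u : G) :
    Nat.card (Quotient (rotSetoid u)) * orderOf u = Nat.card G := by
  rw [rotSetoid_eq_leftRel, ← Nat.card_zpowers]
  exact (Subgroup.card_eq_card_quotient_mul_card_subgroup _).symm

lemma card_range_mk_rotSetoid_comp {u : M} {x : N} {f : M → N} (hf : Function.Injective f)
    (hux : ∀ a, f (u * a) = x * f a) :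
    Nat.card (Set.range fun a => Quotient.mk (rotSetoid x) (f a)) =
      Nat.card (Quotient (rotSetoid u)) := by
  have map_pow_mul (k : ℕ) (a : M) : f (u ^ k * a) = x ^ k * f a := by
    induction k with
    | zero => simp
    | succ k ih => rw [pow_succ', mul_assoc, hux, ih, pow_succ', mul_assoc]
  have rel_iff (a b : M) : rotSetoid x (f a) (f b) ↔ rotSetoid u a b :=
    exists₂_congr fun j k => by rw [← map_pow_mul, ← map_pow_mul, hf.eq_iff]
  let g : Quotient (rotSetoid u) → Quotient (rotSetoid x) :=
    Quotient.map f fun a b => (rel_iff a b).2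
  have injective_g : Function.Injective g := by
    rintro ⟨a⟩ ⟨b⟩ h
    exact Quotient.sound ((rel_iff a b).1 (Quotient.exact h))
  rw [← Nat.card_range_of_injective injective_g, ← Quotient.mk_surjective.range_comp g]
  rfl

end Rotation

section NecklaceStratum

variable {ι R : Type*}

/-- The set `N_I` of the `x`-orbits whose elements `α` are divisible by `P i` exactly for
`i ∉ I`. -/
def necklaceStratum [CommMonoid R] (P : ι → R) (x : R) (I : Finset ι) :
    Set (Quotient (rotSetoid x)) :=
  {c | ∃ α, Quotient.mk (rotSetoid x) α = c ∧ ∀ i, (P i ∣ α ↔ i ∉ I)}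

lemma dvd_iff_of_rotSetoid [CommMonoid R] {x α β : R} (hx : IsUnit x)
    (h : rotSetoid x α β) (P : R) : P ∣ α ↔ P ∣ β := by
  obtain ⟨j, k, h⟩ := h
  rw [← (hx.pow j).dvd_mul_left, h, (hx.pow k).dvd_mul_left]

lemma existsUnique_mem_necklaceStratum [CommMonoid R] [Finite ι] (P : ι → R) {x : R}
    (hx : IsUnit x) (c : Quotient (rotSetoid x)) : ∃! I, c ∈ necklaceStratum P x I := by
  obtain ⟨α, rfl⟩ := c.exists_rep
  refine (existsUnique_congr fun I => ⟨?_, fun h => ⟨α, rfl, h⟩⟩).2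
    (existsUnique_finset_forall_iff_notMem fun i => P i ∣ α)
  rintro ⟨β, hβ, hI⟩ i
  rw [← hI, dvd_iff_of_rotSetoid hx (Quotient.exact hβ)]

end NecklaceStratum

section ExtendUnits

variable {ι : Type*} {K : ι → Type*} {I : Finset ι}

section MonoidWithZero

variable [∀ i, MonoidWithZero (K i)]

open Classical in
/-- Extension by zero to all of `ι` of a family of units indexed by `I`. -/
noncomputable def extendUnits (a : ∀ i : I, (K i)ˣ) (i : ι) : K i :=
  if h : i ∈ I then a ⟨i, h⟩ else 0

lemma extendUnits_apply_coe (a : ∀ i : I, (K i)ˣ) (i : I) : extendUnits a i = a i :=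
  dif_pos i.2

lemma extendUnits_of_notMem (a : ∀ i : I, (K i)ˣ) {i : ι} (hi : i ∉ I) : extendUnits a i = 0 :=
  dif_neg hi

lemma extendUnits_injective :
    Function.Injective (extendUnits : (∀ i : I, (K i)ˣ) → ∀ i, K i) := by
  intro a b h
  ext i
  rw [← extendUnits_apply_coe, h, extendUnits_apply_coe]

lemma extendUnits_mul {u : ∀ i : I, (K i)ˣ} {y : ∀ i, K i} (hu : ∀ i : I, (u i : K i) = y i)
    (a : ∀ i : I, (K i)ˣ) : extendUnits (u * a) = y * extendUnits a := by
  funext i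
  by_cases hi : i ∈ I
  · lift i to I using hi
    rw [Pi.mul_apply, extendUnits_apply_coe, extendUnits_apply_coe, Pi.mul_apply, Units.val_mul,
      hu]
  · rw [Pi.mul_apply, extendUnits_of_notMem _ hi, extendUnits_of_notMem _ hi, mul_zero]

end MonoidWithZero

lemma mem_range_extendUnits [∀ i, GroupWithZero (K i)] {v : ∀ i, K i} :
    v ∈ Set.range (extendUnits (I := I)) ↔ ∀ i, v i = 0 ↔ i ∉ I := by
  constructor
  · rintro ⟨a, rfl⟩ i
    by_cases hi : i ∈ I
    · simp [extendUnits_apply_coe a ⟨i, hi⟩, hi]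
    · simp [extendUnits_of_notMem a hi, hi]
  · intro hv
    refine ⟨fun i => Units.mk0 (v i) fun h => (hv i).1 h i.2, funext fun i => ?_⟩
    by_cases hi : i ∈ I
    · rw [extendUnits_apply_coe _ ⟨i, hi⟩, Units.val_mk0]
    · rw [extendUnits_of_notMem _ hi, (hv i).2 hi]

lemma orderOf_pi_map {κ : Type*} {M N : κ → Type*} [∀ i, Monoid (M i)] [∀ i, Monoid (N i)]
    {f : ∀ i, M i →* N i} (hf : ∀ i, Function.Injective (f i)) (u : ∀ i, M i) :
    orderOf (fun i => f i (u i)) = orderOf u :=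
  orderOf_injective (MonoidHom.piMap f) (Function.Injective.piMap hf) u

variable {R : Type*} [CommMonoid R] [∀ i, CommGroupWithZero (K i)] (E : R ≃* ∀ i, K i)
  {P : ι → R} {x : R}

lemma necklaceStratum_eq_range (hP : ∀ i α, P i ∣ α ↔ E α i = 0) (x : R) (I : Finset ι) :
    necklaceStratum P x I =
      Set.range fun a => Quotient.mk (rotSetoid x) (E.symm (extendUnits (I := I) a)) := by
  ext c
  constructor
  · rintro ⟨α, rfl, hα⟩
    obtain ⟨a, ha⟩ := mem_range_extendUnits.2 fun i => (hP i α).symm.trans (hα i)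
    exact ⟨a, by simp only [ha, E.symm_apply_apply]⟩
  · rintro ⟨a, rfl⟩
    refine ⟨_, rfl, fun i => ?_⟩
    rw [hP, E.apply_symm_apply]
    exact mem_range_extendUnits.1 ⟨a, rfl⟩ i

lemma card_necklaceStratum_mul_orderOf (hP : ∀ i α, P i ∣ α ↔ E α i = 0) (hx : IsUnit x)
    (I : Finset ι) :
    Nat.card (necklaceStratum P x I) * orderOf (fun i : I => E x i) =
      ∏ i ∈ I, (Nat.card (K i) - 1) := by
  let u : ∀ i : I, (K i)ˣ := fun i => ((hx.map E).map (Pi.evalMonoidHom K i)).unit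
  have mul_equivariant (a : ∀ i : I, (K i)ˣ) :
      E.symm (extendUnits (u * a)) = x * E.symm (extendUnits a) := by
    rw [extendUnits_mul (y := E x) fun _ => rfl, map_mul, E.symm_apply_apply]
  have card_eq : Nat.card (necklaceStratum P x I) = Nat.card (Quotient (rotSetoid u)) := by
    rw [necklaceStratum_eq_range E hP]
    exact card_range_mk_rotSetoid_comp (E.symm.injective.comp extendUnits_injective)
      mul_equivariant
  calc Nat.card (necklaceStratum P x I) * orderOf (fun i : I => E x i)
      = Nat.card (Quotient (rotSetoid u)) * orderOf u := by
        rw [card_eq,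
          ← orderOf_pi_map (f := fun i : I => Units.coeHom (K i)) fun _ => Units.val_injective]
        rfl
    _ = Nat.card (∀ i : I, (K i)ˣ) := card_quotient_rotSetoid_mul_orderOf u
    _ = ∏ i : I, (Nat.card (K i) - 1) := by simp only [Nat.card_pi, Nat.card_units]
    _ = ∏ i ∈ I, (Nat.card (K i) - 1) := Finset.prod_coe_sort I fun i => Nat.card (K i) - 1

end ExtendUnits

section MaximalEntries

variable {ι : Type*} {M : ι → ℕ}

/-- The families `v` with `v i ∈ {0, …, M i - 1}` whose entry `v i` is maximal exactly for
`i ∉ I`. -/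
def maximalOff (M : ι → ℕ) (I : Finset ι) : Set (∀ i, Fin (M i)) :=
  {v | ∀ i, (v i : ℕ) = M i - 1 ↔ i ∉ I}

lemma bijOn_natCast_zmod_pred {M : ℕ} (hM : 1 < M) :
    Set.BijOn (fun v : Fin M => ((v : ℕ) : ZMod (M - 1))) {v | (v : ℕ) ≠ M - 1} Set.univ := by
  have : NeZero (M - 1) := ⟨by omega⟩
  have lt_pred {v : Fin M} (hv : (v : ℕ) ≠ M - 1) : (v : ℕ) < M - 1 := by omega
  refine ⟨Set.mapsTo_univ _ _, fun v hv w hw h => Fin.ext ?_, fun a _ => ?_⟩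
  · have := congrArg ZMod.val h
    rwa [ZMod.val_cast_of_lt (lt_pred hv), ZMod.val_cast_of_lt (lt_pred hw)] at this
  · exact ⟨⟨a.val, a.val_lt.trans_le (Nat.sub_le M 1)⟩, a.val_lt.ne, ZMod.natCast_zmod_val a⟩

lemma bijOn_maximalOff (hM : ∀ i, 1 < M i) (I : Finset ι) :
    Set.BijOn (fun v (i : I) => ((v i : ℕ) : ZMod (M i - 1))) (maximalOff M I) Set.univ := by
  classical
  refine ⟨Set.mapsTo_univ _ _, fun v hv w hw h => funext fun i => ?_, fun a _ => ?_⟩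
  · by_cases hi : i ∈ I
    · exact (bijOn_natCast_zmod_pred (hM i)).injOn (fun hmax => (hv i).1 hmax hi)
        (fun hmax => (hw i).1 hmax hi) (congrFun h ⟨i, hi⟩)
    · exact Fin.ext (((hv i).2 hi).trans ((hw i).2 hi).symm)
  · choose b hb hba using fun i : I =>
      (bijOn_natCast_zmod_pred (hM i)).surjOn (Set.mem_univ (a i))
    refine ⟨fun i => if h : i ∈ I then b ⟨i, h⟩ else ⟨M i - 1, Nat.sub_one_lt_of_lt (hM i)⟩,
      fun i => ?_, funext fun i => ?_⟩
    · by_cases hi : i ∈ I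
      · simpa [hi] using hb ⟨i, hi⟩
      · simp [hi]
    · simpa using hba i

end MaximalEntries

section ZeroSum

variable {ι C : Type*} [Fintype ι] [AddCommGroup C] {N M : ι → ℕ} {s : ι → C}

/-- The homomorphism `∏ i, ℤ/N_i → C`, `a ↦ ∑ i, a i • s i`, for elements `s i` killed by `N i`. -/
def zmodCombination (h : ∀ i, N i • s i = 0) : (∀ i, ZMod (N i)) →+ C :=
  ∑ i, (ZMod.lift (N i) ⟨zmultiplesHom C (s i), by simpa using h i⟩).comp
    (Pi.evalAddMonoidHom _ i)

lemma zmodCombination_intCast (h : ∀ i, N i • s i = 0) (a : ι → ℤ) :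
    zmodCombination h (fun i => (a i : ZMod (N i))) = ∑ i, a i • s i := by
  simp [zmodCombination, AddMonoidHom.finsetSum_apply]

lemma zmodCombination_natCast (h : ∀ i, N i • s i = 0) (a : ι → ℕ) :
    zmodCombination h (fun i => (a i : ZMod (N i))) = ∑ i, a i • s i := by
  simpa using zmodCombination_intCast h fun i => (a i : ℤ)

lemma exists_sum_zsmul_eq_zmodCombination (h : ∀ i, N i • s i = 0) (a : ∀ i, ZMod (N i)) :
    ∃ b : ι → ℤ, zmodCombination h a = ∑ i, b i • s i := by
  choose b hb using fun i => ZMod.intCast_surjective (a i)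
  exact ⟨b, by rw [← zmodCombination_intCast h, funext hb]⟩

lemma mem_range_zmodCombination (h : ∀ i, N i • s i = 0) (i : ι) :
    s i ∈ (zmodCombination h).range := by
  classical
  refine ⟨_, (zmodCombination_natCast h (Pi.single i 1)).trans ?_⟩
  simp [Pi.single_apply]

lemma card_range_zmodCombination [IsAddCyclic C] (h : ∀ i, N i • s i = 0) :
    Nat.card (zmodCombination h).range = addOrderOf s := by
  rw [← IsAddCyclic.exponent_eq_card]
  refine Nat.dvd_right_iff_eq.1 fun k => ?_
  rw [AddMonoid.exponent_dvd_iff_forall_nsmul_eq_zero, addOrderOf_dvd_iff_nsmul_eq_zero,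
    funext_iff]
  constructor
  · intro hk i
    simpa using congrArg Subtype.val (hk ⟨s i, mem_range_zmodCombination h i⟩)
  · rintro hk ⟨_, a, rfl⟩
    obtain ⟨b, hb⟩ := exists_sum_zsmul_eq_zmodCombination h a
    ext
    simp only [Pi.smul_apply, Pi.zero_apply] at hk
    simp [hb, Finset.smul_sum, smul_comm k, hk]

lemma card_ker_zmodCombination_mul_addOrderOf [IsAddCyclic C] (h : ∀ i, N i • s i = 0) :
    Nat.card (zmodCombination h).ker * addOrderOf s = ∏ i, N i := by
  rw [← card_range_zmodCombination h, ← AddSubgroup.index_ker, AddSubgroup.card_mul_index,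
    Nat.card_pi]
  simp only [Nat.card_zmod]

lemma sum_nsmul_eq_zmodCombination (hs : ∀ i, (M i - 1) • s i = 0) {I : Finset ι}
    {v : ∀ i, Fin (M i)} (hv : v ∈ maximalOff M I) :
    ∑ i, (v i : ℕ) • s i =
      zmodCombination (fun i : I => hs i) fun i => ((v i : ℕ) : ZMod (M i - 1)) := by
  rw [zmodCombination_natCast (fun i : I => hs i) fun i => (v i : ℕ),
    Finset.sum_coe_sort I fun i => (v i : ℕ) • s i]
  refine (Finset.sum_subset (Finset.subset_univ I) fun i _ hi => ?_).symm
  rw [(hv i).2 hi, hs]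

lemma card_maximalOff_inter_mul_addOrderOf [IsAddCyclic C] (hM : ∀ i, 1 < M i)
    (hs : ∀ i, (M i - 1) • s i = 0) (I : Finset ι) :
    Nat.card ↥(maximalOff M I ∩ {v | ∑ i, (v i : ℕ) • s i = 0}) *
      addOrderOf (fun i : I => s i) = ∏ i ∈ I, (M i - 1) := by
  let φ := zmodCombination fun i : I => hs i
  have inter_eq : maximalOff M I ∩ {v | ∑ i, (v i : ℕ) • s i = 0} =
      maximalOff M I ∩ (fun v (i : I) => ((v i : ℕ) : ZMod (M i - 1))) ⁻¹' φ.ker := by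
    ext v
    refine and_congr_right fun hv => ?_
    rw [Set.mem_ofPred_eq, sum_nsmul_eq_zmodCombination hs hv]
    rfl
  have bijOn_ker := (bijOn_maximalOff hM I).subset_right (Set.subset_univ (φ.ker : Set _))
  rw [inter_eq, Nat.card_congr (bijOn_ker.equiv _), ← Finset.prod_coe_sort]
  exact card_ker_zmodCombination_mul_addOrderOf fun i : I => hs i

end ZeroSum

section PeriodicOrbits

variable {ι X : Type*} {T : X → X} {x : ι → X}

lemma iterate_sigma_bijective (hT : ∀ i, x i ∈ Function.periodicPts T)
    (hx : ∀ z, ∃! i, ∃ k, z = T^[k] (x i)) :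
    Function.Bijective fun p : Σ i, Fin (Function.minimalPeriod T (x i)) => T^[p.2] (x p.1) := by
  constructor
  · rintro ⟨i, j⟩ ⟨i', j'⟩ h
    obtain rfl : i = i' := (hx _).unique ⟨j, rfl⟩ ⟨j', h⟩
    rw [Fin.ext (Function.iterate_injOn_Iio_minimalPeriod j.2 j'.2 h)]
  · intro z
    obtain ⟨i, ⟨k, rfl⟩, -⟩ := hx z
    exact ⟨⟨i, k % _, Nat.mod_lt _ (Function.minimalPeriod_pos_of_mem_periodicPts (hT i))⟩,
      Function.iterate_mod_minimalPeriod_eq⟩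

end PeriodicOrbits

section CyclotomicCosets

variable {ι : Type*} {q n : ℕ}

/-- The cyclotomic coset of `a`, i.e. its orbit under `z ↦ q * z`. -/
def cyclotomicCoset (q : ℕ) (a : ZMod n) : Set (ZMod n) :=
  {z | ∃ j : ℕ, z = (q : ZMod n) ^ j * a}

/-- The size `ℓ` of the cyclotomic coset of `a`, encoded as the least `l > 0` with
`q ^ l * a = a`, and `0` if there is none. -/
noncomputable def cosetPeriod (q : ℕ) (a : ZMod n) : ℕ :=
  Function.minimalPeriod (fun z => (q : ZMod n) * z) a

lemma mem_cyclotomicCoset_iff_iterate {a z : ZMod n} :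
    z ∈ cyclotomicCoset q a ↔ ∃ j, z = (fun y => (q : ZMod n) * y)^[j] a := by
  simp only [mul_left_iterate]
  rfl

lemma pow_cosetPeriod_mul (q : ℕ) (a : ZMod n) : (q : ZMod n) ^ cosetPeriod q a * a = a := by
  have := Function.iterate_minimalPeriod (f := fun z => (q : ZMod n) * z) (x := a)
  rwa [mul_left_iterate] at this

lemma pow_cosetPeriod_sub_one_nsmul (hq : 0 < q) (a : ZMod n) :
    (q ^ cosetPeriod q a - 1) • a = 0 := by
  rw [nsmul_eq_mul, Nat.cast_sub (Nat.one_le_pow _ _ hq), Nat.cast_pow, Nat.cast_one, sub_mul,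
    pow_cosetPeriod_mul, one_mul, sub_self]

variable [NeZero n] (hqn : q.Coprime n)
include hqn

lemma mem_periodicPts_natCast_mul (a : ZMod n) :
    a ∈ Function.periodicPts fun z => (q : ZMod n) * z :=
  Function.Injective.mem_periodicPts ((ZMod.isUnit_iff_coprime q n).2 hqn).mul_right_injective a

lemma cosetPeriod_pos (a : ZMod n) : 0 < cosetPeriod q a :=
  Function.minimalPeriod_pos_of_mem_periodicPts (mem_periodicPts_natCast_mul hqn a)

variable {s : ι → ZMod n} (hs : ∀ z, ∃! i, z ∈ cyclotomicCoset q (s i))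
include hs

/-- The enumeration `(i, j) ↦ q ^ j * s i` of `ℤ/n` along the cyclotomic cosets. -/
noncomputable def cosetEquiv : (Σ i, Fin (cosetPeriod q (s i))) ≃ ZMod n :=
  Equiv.ofBijective _ <|
    iterate_sigma_bijective (fun i => mem_periodicPts_natCast_mul hqn (s i))
      (by simpa only [mem_cyclotomicCoset_iff_iterate] using hs)

lemma cosetEquiv_apply (p : Σ i, Fin (cosetPeriod q (s i))) :
    cosetEquiv hqn hs p = (q : ZMod n) ^ (p.2 : ℕ) * s p.1 :=
  congrFun (mul_left_iterate _ _) _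

lemma cosetEquiv_mem_cyclotomicCoset_iff {p : Σ i, Fin (cosetPeriod q (s i))} {i : ι} :
    cosetEquiv hqn hs p ∈ cyclotomicCoset q (s i) ↔ p.1 = i := by
  have mem_self : cosetEquiv hqn hs p ∈ cyclotomicCoset q (s p.1) :=
    ⟨p.2, cosetEquiv_apply hqn hs p⟩
  exact ⟨(hs _).unique mem_self, fun h => h ▸ mem_self⟩

lemma sum_cosetPeriod [Fintype ι] : ∑ i, cosetPeriod q (s i) = n := by
  simpa using Fintype.card_congr (cosetEquiv hqn hs)

end CyclotomicCosets

section Digits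

variable {ι : Type*} {q n : ℕ}

lemma finFunctionFinEquiv_eq_pow_sub_one_iff (hq : 0 < q) {l : ℕ} (f : Fin l → Fin q) :
    (finFunctionFinEquiv f : ℕ) = q ^ l - 1 ↔ ∀ j, (f j : ℕ) = q - 1 := by
  have sum_maximal_digits : ∑ j : Fin l, (q - 1) * q ^ (j : ℕ) = q ^ l - 1 := by
    rw [← Finset.mul_sum, Fin.sum_univ_eq_sum_range (fun j => q ^ j) l, mul_comm,
      ← geom_sum_mul_of_one_le hq l]
  rw [finFunctionFinEquiv_apply, ← sum_maximal_digits, Finset.sum_eq_sum_iff_of_le fun j _ =>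
    Nat.mul_le_mul_right _ (Nat.le_sub_one_of_lt (f j).2)]
  simp [hq.ne']

variable [NeZero n] (hqn : q.Coprime n) {s : ι → ZMod n}
  (hs : ∀ z, ∃! i, z ∈ cyclotomicCoset q (s i))

/-- Reads the values of `f` along the `i`-th cyclotomic coset, in the order `s i, q * s i, …`, as
the base `q` digits of a number, least significant digit first. -/
noncomputable def cosetDigits : (ZMod n → Fin q) ≃ ∀ i, Fin (q ^ cosetPeriod q (s i)) :=
  ((cosetEquiv hqn hs).symm.arrowCongr (Equiv.refl (Fin q))).trans <|
    (Equiv.piCurry fun _ _ => Fin q).trans <|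
      Equiv.piCongrRight fun _ => finFunctionFinEquiv

lemma cosetDigits_apply (f : ZMod n → Fin q) (i : ι) :
    cosetDigits hqn hs f i = finFunctionFinEquiv fun j => f (cosetEquiv hqn hs ⟨i, j⟩) :=
  rfl

lemma cosetDigits_eq_pow_sub_one_iff (hq : 0 < q) (f : ZMod n → Fin q) (i : ι) :
    (cosetDigits hqn hs f i : ℕ) = q ^ cosetPeriod q (s i) - 1 ↔
      ∀ z ∈ cyclotomicCoset q (s i), (f z : ℕ) = q - 1 := by
  rw [cosetDigits_apply, finFunctionFinEquiv_eq_pow_sub_one_iff hq,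
    (cosetEquiv hqn hs).surjective.forall]
  simp only [cosetEquiv_mem_cyclotomicCoset_iff, Sigma.forall]
  exact ⟨by rintro h _ j rfl; exact h j, fun h j => h i j rfl⟩

lemma sum_mul_eq_sum_cosetDigits_nsmul [Fintype ι] (f : ZMod n → Fin q) :
    ∑ z : ZMod n, z * ((f z : ℕ) : ZMod n) = ∑ i, (cosetDigits hqn hs f i : ℕ) • s i := by
  rw [← (cosetEquiv hqn hs).sum_comp, Fintype.sum_sigma]
  refine Finset.sum_congr rfl fun i _ => ?_
  rw [cosetDigits_apply, finFunctionFinEquiv_apply, Finset.sum_smul]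
  refine Finset.sum_congr rfl fun j _ => ?_
  rw [cosetEquiv_apply, nsmul_eq_mul]
  push_cast
  ring

end Digits

section ZeroSumStratum

variable {ι : Type*} {q n : ℕ} [NeZero n]

/-- The set `F_I` of the `f` in `F(n, q)` which are constantly `q - 1` on the `i`-th cyclotomic
coset exactly for `i ∉ I`. -/
def zeroSumStratum (q : ℕ) (s : ι → ZMod n) (I : Finset ι) :
    Set {f : ZMod n → Fin q // ∑ z : ZMod n, z * ((f z : ℕ) : ZMod n) = 0} :=
  {f | ∀ i, (∀ z ∈ cyclotomicCoset q (s i), (f.1 z : ℕ) = q - 1) ↔ i ∉ I}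

lemma existsUnique_mem_zeroSumStratum [Finite ι] (s : ι → ZMod n)
    (f : {f : ZMod n → Fin q // ∑ z : ZMod n, z * ((f z : ℕ) : ZMod n) = 0}) :
    ∃! I, f ∈ zeroSumStratum q s I :=
  existsUnique_finset_forall_iff_notMem _

variable (hqn : q.Coprime n) {s : ι → ZMod n} (hs : ∀ z, ∃! i, z ∈ cyclotomicCoset q (s i))

lemma image_cosetDigits_zeroSumStratum [Fintype ι] (hq : 0 < q) (I : Finset ι) :
    (fun f => cosetDigits hqn hs f.1) '' zeroSumStratum q s I =
      maximalOff (fun i => q ^ cosetPeriod q (s i)) I ∩ {v | ∑ i, (v i : ℕ) • s i = 0} := by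
  ext v
  obtain ⟨f, rfl⟩ := (cosetDigits hqn hs).surjective v
  simp only [Set.mem_image, EmbeddingLike.apply_eq_iff_eq, Subtype.exists, exists_and_right,
    exists_eq_right, Set.mem_inter_iff, zeroSumStratum, maximalOff, Set.mem_ofPred_eq,
    cosetDigits_eq_pow_sub_one_iff hqn hs hq, ← sum_mul_eq_sum_cosetDigits_nsmul hqn hs]
  exact ⟨fun ⟨h, hI⟩ => ⟨hI, h⟩, fun ⟨hI, h⟩ => ⟨h, hI⟩⟩

include hqn hs in
lemma card_zeroSumStratum_mul_addOrderOf [Finite ι] (hq : 1 < q) (I : Finset ι) :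
    Nat.card (zeroSumStratum q s I) * addOrderOf (fun i : I => s i) =
      ∏ i ∈ I, (q ^ cosetPeriod q (s i) - 1) := by
  cases nonempty_fintype ι
  have hq0 := zero_lt_one.trans hq
  rw [← Nat.card_image_of_injective ((cosetDigits hqn hs).injective.comp Subtype.val_injective),
    ← card_maximalOff_inter_mul_addOrderOf
      (fun i => Nat.one_lt_pow (cosetPeriod_pos hqn (s i)).ne' hq)
      (fun i => pow_cosetPeriod_sub_one_nsmul hq0 (s i)),
    ← image_cosetDigits_zeroSumStratum hqn hs hq0]
  rfl

end ZeroSumStratum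

section PrimitiveRootPowers

variable {M : Type*} [CommMonoid M] {ω : M} {n : ℕ}

lemma pow_pow_eq_one (hω : IsPrimitiveRoot ω n) (a : ℕ) : (ω ^ a) ^ n = 1 := by
  rw [pow_right_comm, hω.pow_eq_one, one_pow]

variable [NeZero n]

lemma pow_eq_pow_iff_natCast_zmod_eq (hω : IsPrimitiveRoot ω n) {a b : ℕ} :
    ω ^ a = ω ^ b ↔ (a : ZMod n) = b := by
  obtain ⟨u, rfl⟩ := hω.isUnit (NeZero.ne n)
  rw [← Units.val_pow_eq_pow_val, ← Units.val_pow_eq_pow_val, Units.val_inj, pow_eq_pow_iff_modEq,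
    ← orderOf_units, ← hω.eq_orderOf, ZMod.natCast_eq_natCast_iff]

lemma orderOf_pow_eq_addOrderOf_natCast {κ : Type*} (hω : IsPrimitiveRoot ω n) (a : κ → ℕ) :
    orderOf (fun i => ω ^ a i) = addOrderOf fun i => (a i : ZMod n) := by
  refine Nat.dvd_right_iff_eq.1 fun k => ?_
  simp only [orderOf_dvd_iff_pow_eq_one, addOrderOf_dvd_iff_nsmul_eq_zero, funext_iff,
    Pi.pow_apply, Pi.one_apply, Pi.smul_apply, Pi.zero_apply, ← pow_mul]
  refine forall_congr' fun i => ?_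
  rw [← pow_zero ω, pow_eq_pow_iff_natCast_zmod_eq hω, Nat.cast_mul, mul_comm, nsmul_eq_mul,
    Nat.cast_zero]

lemma minimalPeriod_pow_eq_cosetPeriod (hω : IsPrimitiveRoot ω n) (q a : ℕ) :
    Function.minimalPeriod (fun x => x ^ q) (ω ^ a) = cosetPeriod q (a : ZMod n) := by
  refine Function.minimalPeriod_eq_minimalPeriod_iff.2 fun k => ?_
  simp only [Function.IsPeriodicPt, Function.IsFixedPt, pow_iterate, mul_left_iterate]
  rw [← pow_mul, pow_eq_pow_iff_natCast_zmod_eq hω, mul_comm a, Nat.cast_mul, Nat.cast_pow]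

end PrimitiveRootPowers

section FiniteField

open IntermediateField

variable {F : Type*} [Field F] [Fintype F]

lemma frobeniusAlgHom_pow_apply {A : Type*} [CommRing A] [Algebra F A] (k : ℕ) (x : A) :
    (FiniteField.frobeniusAlgHom F A ^ k) x = x ^ Fintype.card F ^ k := by
  rw [AlgHom.coe_pow, FiniteField.coe_frobeniusAlgHom, pow_iterate]

lemma aeval_pow_card_pow {A : Type*} [CommRing A] [Algebra F A] (x : A) (k : ℕ) (p : F[X]) :
    aeval (x ^ Fintype.card F ^ k) p = aeval x p ^ Fintype.card F ^ k := by
  rw [← frobeniusAlgHom_pow_apply, aeval_algHom_apply, frobeniusAlgHom_pow_apply]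

lemma finrank_adjoin_simple_eq_minimalPeriod {L : Type*} [Field L] [Algebra F L] {ζ : L}
    (hζ : IsIntegral F ζ) :
    Module.finrank F F⟮ζ⟯ = Function.minimalPeriod (fun x => x ^ Fintype.card F) ζ := by
  have := adjoin.finiteDimensional hζ
  have := Module.finite_of_finite F (M := F⟮ζ⟯)
  rw [← FiniteField.orderOf_frobeniusAlgHom F F⟮ζ⟯]
  refine Nat.dvd_right_iff_eq.1 fun k => ?_
  rw [orderOf_dvd_iff_pow_eq_one, ← Function.isPeriodicPt_iff_minimalPeriod_dvd]
  simp only [Function.IsPeriodicPt, Function.IsFixedPt, pow_iterate]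
  calc FiniteField.frobeniusAlgHom F F⟮ζ⟯ ^ k = 1
      ↔ (FiniteField.frobeniusAlgHom F F⟮ζ⟯ ^ k) (AdjoinSimple.gen F ζ) =
          AdjoinSimple.gen F ζ := by
        refine ⟨fun h => by rw [h, AlgHom.one_apply], fun h => ?_⟩
        refine algHom_ext_of_eq_adjoin _ rfl ?_
        rintro _ rfl
        exact h
    _ ↔ ζ ^ Fintype.card F ^ k = ζ := by
        rw [frobeniusAlgHom_pow_apply, Subtype.ext_iff, SubmonoidClass.coe_pow,
          AdjoinSimple.coe_gen]

end FiniteField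

section CyclotomicDecomposition

open IntermediateField

section Field

variable {F : Type} [Field F] {n : ℕ} {ζ : AlgebraicClosure F}

lemma adjoinSimpleGen_pow_eq_one (hζ : ζ ^ n = 1) : AdjoinSimple.gen F ζ ^ n = 1 :=
  Subtype.ext (by simpa using hζ)

/-- Evaluation at an `n`-th root of unity `ζ`, as a map from `F[X] / (X ^ n - 1)` onto `F⟮ζ⟯`. -/
noncomputable def evalRoot (hζ : ζ ^ n = 1) : Qring F n →ₐ[F] F⟮ζ⟯ :=
  AdjoinRoot.liftAlgHom _ (Algebra.ofId F F⟮ζ⟯) (AdjoinSimple.gen F ζ) <| by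
    simp [adjoinSimpleGen_pow_eq_one hζ]

lemma coe_evalRoot_mk (hζ : ζ ^ n = 1) (p : F[X]) :
    (evalRoot hζ (AdjoinRoot.mk _ p) : AlgebraicClosure F) = aeval ζ p := by
  rw [← AdjoinSimple.coe_aeval_gen_apply]
  exact congrArg Subtype.val (AdjoinRoot.liftAlgHom_mk _ _ _ _ p)

lemma coe_evalRoot_Xbar (hζ : ζ ^ n = 1) :
    (evalRoot hζ (Xbar F n) : AlgebraicClosure F) = ζ := by
  rw [Xbar, ← AdjoinRoot.mk_X, coe_evalRoot_mk, aeval_X]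

lemma Pbar_dvd_iff_evalRoot_eq_zero (hζ : ζ ^ n = 1) (α : Qring F n) :
    Pbar F n ζ ∣ α ↔ evalRoot hζ α = 0 := by
  have eval_Pbar : evalRoot hζ (Pbar F n ζ) = 0 :=
    Subtype.ext ((coe_evalRoot_mk hζ _).trans (minpoly.aeval F ζ))
  constructor
  · intro h
    exact zero_dvd_iff.1 (eval_Pbar ▸ map_dvd (evalRoot hζ) h)
  · intro h
    obtain ⟨p, rfl⟩ := AdjoinRoot.mk_surjective α
    refine map_dvd (AdjoinRoot.mk _) (minpoly.dvd F ζ ?_)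
    rw [← coe_evalRoot_mk hζ, h, ZeroMemClass.coe_zero]

lemma isUnit_Xbar (hn : n ≠ 0) : IsUnit (Xbar F n) := by
  refine IsUnit.of_pow_eq_one (n := n) (sub_eq_zero.1 ?_) hn
  rw [Xbar, ← AdjoinRoot.mk_X, ← map_pow, ← map_one (AdjoinRoot.mk _), ← map_sub,
    AdjoinRoot.mk_self]

end Field

lemma X_pow_sub_one_dvd_of_aeval_pow_eq_zero {F L : Type*} [Field F] [Field L] [Algebra F L]
    {n : ℕ} [NeZero n] {ω : L} (hω : IsPrimitiveRoot ω n) {p : F[X]}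
    (hp : ∀ k : ℕ, aeval (ω ^ k) p = 0) : X ^ n - 1 ∣ p := by
  rw [← Polynomial.map_dvd_map' (algebraMap F L)]
  simp only [Polynomial.map_sub, Polynomial.map_pow, map_X, Polynomial.map_one]
  rw [X_pow_sub_one_eq_prod (NeZero.pos n) hω]
  refine Finset.prod_dvd_of_coprime
    ((pairwise_coprime_X_sub_C Function.injective_id).set_pairwise _) fun ξ hξ => ?_
  obtain ⟨k, -, rfl⟩ := hω.eq_pow_of_pow_eq_one ((mem_nthRootsFinset (NeZero.pos n) 1).1 hξ)
  rw [dvd_iff_isRoot, IsRoot.def, eval_map_algebraMap, hp]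

lemma finrank_Qring (F : Type) [Field F] (n : ℕ) : Module.finrank F (Qring F n) = n :=
  (finrank_quotient_span_eq_natDegree (f := (X : F[X]) ^ n - 1)).trans
    (natDegree_X_pow_sub_C (r := (1 : F)))

lemma moduleFinite_Qring (F : Type) [Field F] (n : ℕ) [NeZero n] : Module.Finite F (Qring F n) :=
  Module.finite_of_finrank_pos ((finrank_Qring F n).symm ▸ NeZero.pos n)

section Decomposition

variable {F : Type} [Field F] {n : ℕ} {ω : AlgebraicClosure F} (hω : IsPrimitiveRoot ω n)
  {ι : Type*} (s : ι → ℕ)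

/-- Simultaneous evaluation at the roots of unity `ω ^ s i`. -/
noncomputable def evalRoots : Qring F n →ₐ[F] ∀ i, F⟮ω ^ s i⟯ :=
  AlgHom.pi fun i => evalRoot (pow_pow_eq_one hω (s i))

lemma coe_evalRoots_mk (p : F[X]) (i : ι) :
    (evalRoots hω s (AdjoinRoot.mk _ p) i : AlgebraicClosure F) = aeval (ω ^ s i) p :=
  coe_evalRoot_mk (pow_pow_eq_one hω (s i)) p

variable [NeZero n]

lemma orderOf_evalRoots_Xbar (I : Finset ι) :
    orderOf (fun i : I => evalRoots hω s (Xbar F n) i) =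
      addOrderOf fun i : I => (s i : ZMod n) := by
  rw [← orderOf_pow_eq_addOrderOf_natCast hω,
    ← orderOf_pi_map (f := fun i : I => (F⟮ω ^ s i⟯.val : F⟮ω ^ s i⟯ →* AlgebraicClosure F))
      fun i => F⟮ω ^ s i⟯.val.injective]
  congr! with i
  exact coe_evalRoot_Xbar (pow_pow_eq_one hω (s i))

variable [Fintype F]
include hω

lemma finrank_adjoin_pow_eq_cosetPeriod (a : ℕ) :
    Module.finrank F F⟮ω ^ a⟯ = cosetPeriod (Fintype.card F) (a : ZMod n) := by
  rw [finrank_adjoin_simple_eq_minimalPeriod (Algebra.IsIntegral.isIntegral _),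
    minimalPeriod_pow_eq_cosetPeriod hω]

lemma card_adjoin_pow_eq_pow_cosetPeriod (a : ℕ) :
    Nat.card F⟮ω ^ a⟯ = Fintype.card F ^ cosetPeriod (Fintype.card F) (a : ZMod n) := by
  have := adjoin.finiteDimensional (Algebra.IsIntegral.isIntegral (R := F) (ω ^ a))
  rw [Module.natCard_eq_pow_finrank (K := F), finrank_adjoin_pow_eq_cosetPeriod hω,
    Nat.card_eq_fintype_card]

variable {s} (hs : ∀ z : ZMod n, ∃! i, z ∈ cyclotomicCoset (Fintype.card F) (s i : ZMod n))
include hs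

/-- The Frobenius automorphism carries a zero at `ω ^ s i` to all `ω ^ k` with `k` in the
cyclotomic coset of `s i`. -/
lemma evalRoots_injective : Function.Injective (evalRoots hω s) := by
  refine (injective_iff_map_eq_zero _).2 fun α hα => ?_
  obtain ⟨p, rfl⟩ := AdjoinRoot.mk_surjective α
  have aeval_rep (i : ι) : aeval (ω ^ s i) p = 0 := by
    rw [← coe_evalRoots_mk hω, hα]
    rfl
  refine AdjoinRoot.mk_eq_zero.2 (X_pow_sub_one_dvd_of_aeval_pow_eq_zero hω fun k => ?_)
  obtain ⟨i, ⟨j, hj⟩, -⟩ := hs k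
  have pow_eq : ω ^ k = (ω ^ s i) ^ Fintype.card F ^ j := by
    rw [← pow_mul, pow_eq_pow_iff_natCast_zmod_eq hω, hj, Nat.cast_mul, Nat.cast_pow, mul_comm]
  rw [pow_eq, aeval_pow_card_pow, aeval_rep, zero_pow (pow_ne_zero _ Fintype.card_ne_zero)]

lemma evalRoots_bijective [Finite ι] (hqn : (Fintype.card F).Coprime n) :
    Function.Bijective (evalRoots hω s) := by
  cases nonempty_fintype ι
  have (i : ι) := adjoin.finiteDimensional (Algebra.IsIntegral.isIntegral (R := F) (ω ^ s i))
  have := moduleFinite_Qring F n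
  have finrank_eq : Module.finrank F (Qring F n) = Module.finrank F (∀ i, F⟮ω ^ s i⟯) := by
    simp only [finrank_Qring, Module.finrank_pi_fintype, finrank_adjoin_pow_eq_cosetPeriod hω,
      sum_cosetPeriod hqn hs]
  have inj := evalRoots_injective hω hs
  exact ⟨inj, (LinearMap.injective_iff_surjective_of_finrank_eq_finrank finrank_eq
    (f := (evalRoots hω s).toLinearMap)).1 inj⟩

lemma card_necklaceStratum_Pbar_mul_addOrderOf [Finite ι] (hqn : (Fintype.card F).Coprime n)
    (I : Finset ι) :
    Nat.card (necklaceStratum (fun i => Pbar F n (ω ^ s i)) (Xbar F n) I) *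
        addOrderOf (fun i : I => (s i : ZMod n)) =
      ∏ i ∈ I, (Fintype.card F ^ cosetPeriod (Fintype.card F) (s i : ZMod n) - 1) := by
  simp only [← card_adjoin_pow_eq_pow_cosetPeriod hω, ← orderOf_evalRoots_Xbar hω]
  exact card_necklaceStratum_mul_orderOf
    (MulEquiv.ofBijective (evalRoots hω s) (evalRoots_bijective hω hs hqn))
    (fun i α => Pbar_dvd_iff_evalRoot_eq_zero (pow_pow_eq_one hω (s i)) α)
    (isUnit_Xbar (NeZero.ne n)) I

end Decomposition

end CyclotomicDecomposition

/-- For `q` a prime power coprime to `n`, there is a bijection `Φ` from the set `N(n,q)`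
of necklaces (orbits of `Q = F_q[X]/(X^n-1)` under multiplication by `X`) to the set
`F(n,q)` of functions `f : ZMod n → {0,…,q-1}` with `∑ z, z·f(z) ≡ 0 (mod n)`, which
moreover restricts, for every `I ⊆ {1,…,m}`, to a bijection from `N_I` onto `F_I`.
Here `S_1,…,S_m` are the cyclotomic cosets (orbits of `z ↦ q·z` on `ZMod n`) with
representatives `s i`, `ω` is a primitive `n`-th root of unity over `F_q`,
`N_I` consists of the orbits of those `α` divisible by `P_i` exactly for `i ∉ I`, and
`F_I` of those `f ∈ F(n,q)` taking the value `q-1` on all of `S_i` exactly for `i ∉ I`. -/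
theorem exists_necklace_bijection
    (q n : ℕ) (hq : IsPrimePow q) (hn : 0 < n) [NeZero n] (hqn : Nat.Coprime q n)
    (F : Type) [Field F] [Fintype F] (hF : Fintype.card F = q)
    (ω : AlgebraicClosure F) (hω : IsPrimitiveRoot ω n)
    (m : ℕ) (s : Fin m → ℕ)
    (hS : ∀ z : ZMod n, ∃! i : Fin m, ∃ j : ℕ, z = (q : ZMod n) ^ j * (s i : ZMod n)) :
    ∃ Φ : Quotient (rotSetoid (Xbar F n)) →
        {f : ZMod n → Fin q // ∑ z : ZMod n, z * ((f z : ℕ) : ZMod n) = 0},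
      Function.Bijective Φ ∧
      ∀ I : Finset (Fin m),
        Set.BijOn Φ
          {c | ∃ α : Qring F n, Quotient.mk (rotSetoid (Xbar F n)) α = c ∧
              ∀ i, (Pbar F n (ω ^ (s i)) ∣ α ↔ i ∉ I)}
          {f | ∀ i, ((∀ z : ZMod n,
              (∃ j : ℕ, z = (q : ZMod n) ^ j * (s i : ZMod n)) → (f.1 z : ℕ) = q - 1)
            ↔ i ∉ I)} := by
  subst hF
  have := moduleFinite_Qring F n
  have : Finite (Qring F n) := Module.finite_of_finite F
  exact exists_bijective_bijOn_of_card_eq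
    (necklaceStratum (fun i => Pbar F n (ω ^ s i)) (Xbar F n))
    (zeroSumStratum (Fintype.card F) fun i => (s i : ZMod n))
    (existsUnique_mem_necklaceStratum _ (isUnit_Xbar hn.ne'))
    (existsUnique_mem_zeroSumStratum _)
    fun I => Nat.eq_of_mul_eq_mul_right (addOrderOf_pos _) <|
      (card_necklaceStratum_Pbar_mul_addOrderOf hω hS hqn I).trans
        (card_zeroSumStratum_mul_addOrderOf hqn hS Fintype.one_lt_card I).symm
end

section
/- Let q be a prime power and n a positive integer coprime to q. Then for every subset I ⊆ {1,...,m}, the sets N_I and F_I have the same cardinality. -/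
open Polynomial

/-!
Let `d i` be the size of the coset `S i`. Both sets have `∏ i ∈ I, (q ^ d i - 1) / e` elements,
where `e` is the order of the subgroup of `ZMod n` generated by the `s i` with `i ∈ I`.

Evaluation at the `ω ^ s i` identifies `Q` with the product of the fields with `q ^ d i` elements.
The elements of `Q` divisible by `P i` exactly for `i ∉ I` become the vectors whose support is `I`,
of which there are `∏ i ∈ I, (q ^ d i - 1)`. Since `X` multiplies the `i`-th coordinate by
`ω ^ s i`, each of its orbits on these vectors has `e` elements.

Reading the values of `f` along `S i` as base-`q` digits turns `f` into numbers `k i < q ^ d i`,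
and `∑ z, z * f z` into `∑ i, k i * s i`. Here `k i = q ^ d i - 1` means that `f` is `q - 1` on
all of `S i`, and such a term vanishes because `q ^ d i * s i = s i`. So `F_I`
corresponds to the kernel of the homomorphism `k ↦ ∑ i ∈ I, k i * s i` from
`∏ i ∈ I, ZMod (q ^ d i - 1)` to `ZMod n`, whose image has order `e`.
-/

section Orbit

variable {M α : Type*} [Monoid M] [MulAction M α]

/-- The forward orbit of a periodic point `a` under `m`, indexed by the exponents below the
period. -/
noncomputable def finPeriodEquivOrbit (m : M) (a : α) (ha : 0 < MulAction.period m a) :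
    Fin (MulAction.period m a) ≃ {b : α // ∃ j : ℕ, b = m ^ j • a} :=
  Equiv.ofBijective (fun k => ⟨m ^ (k : ℕ) • a, k, rfl⟩) <| by
    refine ⟨fun k l hkl => Fin.ext ?_, ?_⟩
    · refine Function.iterate_injOn_Iio_minimalPeriod (f := (m • ·)) (x := a) k.2 l.2 ?_
      simpa only [smul_iterate_apply] using congrArg Subtype.val hkl
    · rintro ⟨_, j, rfl⟩
      exact ⟨⟨_, Nat.mod_lt j ha⟩, Subtype.ext (MulAction.pow_mod_period_smul j)⟩

end Orbit

section Necklace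

variable {M : Type*} [CommMonoid M] {x : M} {p : M → Prop} {e : ℕ}

lemma rotSetoid_iff_exists_eq_pow_smul {a b : M} (hb : 0 < MulAction.period x b) :
    rotSetoid x b a ↔ ∃ j : ℕ, b = x ^ j • a := by
  refine ⟨fun ⟨j, k, hjk⟩ => ?_, fun ⟨j, hj⟩ => ⟨0, j, by simpa using hj⟩⟩
  obtain ⟨r, hr⟩ : ∃ r, r + j = MulAction.period x b * j :=
    ⟨MulAction.period x b * j - j, Nat.sub_add_cancel (Nat.le_mul_of_pos_left j hb)⟩
  refine ⟨r + k, ?_⟩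
  calc b = x ^ (r + j) • b := (MulAction.pow_smul_eq_iff_period_dvd.2 (hr ▸ dvd_mul_right _ _)).symm
    _ = x ^ (r + k) • a := by simp only [smul_eq_mul, pow_add, mul_assoc, hjk]

lemma nonempty_necklace_equiv_fin (he : 0 < e) (hmul : ∀ a, p a → p (x * a))
    (hperiod : ∀ a, p a → MulAction.period x a = e) {a : M} (ha : p a) :
    Nonempty ({b : {b // p b} // Quotient.mk (rotSetoid x) b.1 = Quotient.mk _ a} ≃ Fin e) := by
  have hpow (j : ℕ) : p (x ^ j • a) := by
    induction j with
    | zero => simpa using ha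
    | succ j ih => simpa only [smul_eq_mul, pow_succ', mul_assoc] using hmul _ ih
  have hrot {b : M} (hb : p b) :
      Quotient.mk (rotSetoid x) b = Quotient.mk _ a ↔ ∃ j : ℕ, b = x ^ j • a :=
    Quotient.eq.trans (rotSetoid_iff_exists_eq_pow_smul (he.trans_eq (hperiod b hb).symm))
  have hp {b : M} : (∃ j : ℕ, b = x ^ j • a) → p b := fun ⟨j, hj⟩ => hj ▸ hpow j
  have hpos : 0 < MulAction.period x a := he.trans_eq (hperiod a ha).symm
  exact ⟨(Equiv.subtypeEquivRight fun b : {b // p b} => hrot b.2).trans <|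
    (Equiv.subtypeSubtypeEquivSubtype hp).trans <|
    (finPeriodEquivOrbit x a hpos).symm.trans (finCongr (hperiod a ha))⟩

lemma card_necklaces_mul (he : 0 < e) (hmul : ∀ a, p a → p (x * a))
    (hperiod : ∀ a, p a → MulAction.period x a = e) :
    Nat.card {c : Quotient (rotSetoid x) | ∃ a, Quotient.mk (rotSetoid x) a = c ∧ p a} * e =
      Nat.card {a // p a} := by
  let toNecklace (a : {a // p a}) :
      {c : Quotient (rotSetoid x) | ∃ a, Quotient.mk (rotSetoid x) a = c ∧ p a} :=
    ⟨Quotient.mk _ a.1, a.1, rfl, a.2⟩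
  have hfiber (c) : Nonempty ({a // toNecklace a = c} ≃ Fin e) := by
    obtain ⟨_, a, rfl, ha⟩ := c
    obtain ⟨E⟩ := nonempty_necklace_equiv_fin he hmul hperiod ha
    exact ⟨(Equiv.subtypeEquivRight fun _ => Subtype.ext_iff).trans E⟩
  calc _ = Nat.card (_ × Fin e) := by rw [Nat.card_prod, Nat.card_fin]
    _ = Nat.card {a // p a} := Nat.card_congr <|
      (Equiv.sigmaEquivProd _ _).symm.trans <|
      (Equiv.sigmaCongrRight fun c => (hfiber c).some.symm).trans (Equiv.sigmaFiberEquiv toNecklace)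

end Necklace

section WeightedSum

variable {G : Type*} [AddCommGroup G]

lemma card_closure_dvd_iff [IsAddCyclic G] {S : Set G} {k : ℕ} :
    Nat.card (AddSubgroup.closure S) ∣ k ↔ ∀ g ∈ S, k • g = 0 := by
  have hker : (∀ g ∈ AddSubgroup.closure S, k • g = 0) ↔ ∀ g ∈ S, k • g = 0 :=
    AddSubgroup.closure_le (nsmulAddMonoidHom k : G →+ G).ker
  rw [← IsAddCyclic.exponent_eq_card, AddMonoid.exponent_dvd_iff_forall_nsmul_eq_zero, ← hker]
  simp [Subtype.ext_iff]

variable {κ : Type*} [Fintype κ] {N : κ → ℕ} [∀ i, NeZero (N i)] {t : κ → G}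

/-- The sum `∑ i, k i • t i`, a homomorphism from the residues `k i` modulo `N i` because
`N i • t i = 0`. -/
def weightedSumHom (hN : ∀ i, N i • t i = 0) : (∀ i, Fin (N i)) →+ G :=
  AddMonoidHom.mk' (fun k => ∑ i, (k i : ℕ) • t i) fun k l => by
    simp only [Pi.add_apply, Fin.val_add, ← nsmul_eq_mod_nsmul _ (hN _), add_nsmul,
      Finset.sum_add_distrib]

lemma weightedSumHom_apply (hN : ∀ i, N i • t i = 0) (k : ∀ i, Fin (N i)) :
    weightedSumHom hN k = ∑ i, (k i : ℕ) • t i := rfl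

lemma weightedSumHom_single [DecidableEq κ] (hN : ∀ i, N i • t i = 0) (i : κ) :
    weightedSumHom hN (Pi.single i (Fin.ofNat (N i) 1)) = t i := by
  rw [weightedSumHom_apply, Finset.sum_eq_single i (fun j _ hj => by simp [hj]) (by simp),
    Pi.single_eq_same, Fin.val_ofNat, ← nsmul_eq_mod_nsmul _ (hN i), one_nsmul]

lemma range_weightedSumHom (hN : ∀ i, N i • t i = 0) :
    (weightedSumHom hN).range = AddSubgroup.closure (Set.range t) := by
  classical
  refine le_antisymm ?_ ((AddSubgroup.closure_le _).2 ?_)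
  · rintro _ ⟨k, rfl⟩
    exact sum_mem fun i _ => nsmul_mem (AddSubgroup.subset_closure (Set.mem_range_self i)) _
  · rintro _ ⟨i, rfl⟩
    exact ⟨Pi.single i (Fin.ofNat _ 1), weightedSumHom_single hN i⟩

lemma card_weightedSum_eq_zero_mul (hN : ∀ i, N i • t i = 0) :
    Nat.card {k : ∀ i, Fin (N i) // ∑ i, (k i : ℕ) • t i = 0} *
      Nat.card (AddSubgroup.closure (Set.range t)) = ∏ i, N i := by
  calc _ = Nat.card (weightedSumHom hN).ker * (weightedSumHom hN).ker.index := by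
        rw [AddSubgroup.index_ker, range_weightedSumHom]
        rfl
    _ = ∏ i, N i := by
      rw [AddSubgroup.card_mul_index, Nat.card_pi]
      simp only [Nat.card_fin]

end WeightedSum

section Coset

variable {q n : ℕ} {ι : Type*} {s : ι → ZMod n}

/-- The family `s` contains exactly one representative of each `q`-cyclotomic coset modulo `n`. -/
def IsCosetTransversal (q : ℕ) (s : ι → ZMod n) : Prop :=
  ∀ z : ZMod n, ∃! i, ∃ j : ℕ, z = (q : ZMod n) ^ j * s i

/-- The size of the `q`-cyclotomic coset of `z` modulo `n`, when `q` is coprime to `n`. -/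
noncomputable def cosetSize (q : ℕ) (z : ZMod n) : ℕ := MulAction.period (q : ZMod n) z

lemma pow_cosetSize_mul (z : ZMod n) : (q : ZMod n) ^ cosetSize q z * z = z :=
  MulAction.pow_period_smul (q : ZMod n) z

lemma cosetSize_pos [NeZero n] (hqn : q.Coprime n) (z : ZMod n) : 0 < cosetSize q z := by
  refine MulAction.period_pos_of_fixed (Nat.totient_pos.2 (NeZero.pos n)) ?_
  have hpow : (q : ZMod n) ^ n.totient = 1 := by
    exact_mod_cast (ZMod.natCast_eq_natCast_iff _ _ _).2 (Nat.ModEq.pow_totient hqn)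
  rw [hpow, one_smul]

lemma pow_cosetSize_sub_one_nsmul [NeZero q] (z : ZMod n) :
    (q ^ cosetSize q z - 1) • z = 0 := by
  rw [nsmul_eq_mul, Nat.cast_sub (Nat.pow_pos (NeZero.pos q)), sub_mul, Nat.cast_pow,
    pow_cosetSize_mul, Nat.cast_one, one_mul, sub_self]

namespace IsCosetTransversal

/-- Every residue is `q ^ j * s i` for a unique `i` and a unique `j` below the size of the coset
of `s i`. -/
noncomputable def equiv [NeZero n] (hs : IsCosetTransversal q s) (hqn : q.Coprime n) :
    (Σ i, Fin (cosetSize q (s i))) ≃ ZMod n :=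
  (Equiv.sigmaCongrRight fun i =>
    finPeriodEquivOrbit (q : ZMod n) (s i) (cosetSize_pos hqn _)).trans
    (Equiv.ofBijective (fun z => z.2.1) <| by
      refine ⟨?_, fun z => ?_⟩
      · rintro ⟨i, z, hz⟩ ⟨i', z', hz'⟩ rfl
        obtain rfl := (hs z).unique hz hz'
        rfl
      · obtain ⟨i, hz, -⟩ := hs z
        exact ⟨⟨i, z, hz⟩, rfl⟩)

lemma equiv_apply [NeZero n] (hs : IsCosetTransversal q s) (hqn : q.Coprime n) (i : ι)
    (j : Fin (cosetSize q (s i))) : hs.equiv hqn ⟨i, j⟩ = (q : ZMod n) ^ (j : ℕ) * s i := rfl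

lemma sum_cosetSize [NeZero n] [Fintype ι] (hs : IsCosetTransversal q s) (hqn : q.Coprime n) :
    ∑ i, cosetSize q (s i) = n := by
  simpa using Nat.card_congr (hs.equiv hqn)

end IsCosetTransversal

end Coset

section Digit

lemma fin_eq_top_iff_val_eq {N : ℕ} [NeZero N] {x : Fin N} : x = ⊤ ↔ (x : ℕ) = N - 1 :=
  Fin.ext_iff

lemma finFunctionFinEquiv_eq_top_iff {q d : ℕ} [NeZero q] {g : Fin d → Fin q} :
    finFunctionFinEquiv g = ⊤ ↔ ∀ j, g j = ⊤ := by
  have hq : q - 1 + 1 = q := Nat.sub_add_cancel (NeZero.pos q)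
  have htop : finFunctionFinEquiv (fun _ : Fin d => (⊤ : Fin q)) = ⊤ := by
    rw [fin_eq_top_iff_val_eq, finFunctionFinEquiv_apply, fin_eq_top_iff_val_eq.1 rfl,
      ← Finset.mul_sum, Fin.sum_univ_eq_sum_range (q ^ ·), mul_comm]
    have := geom_sum_mul_add (q - 1) d
    rw [hq] at this
    omega
  rw [← htop, finFunctionFinEquiv.apply_eq_iff_eq, funext_iff]

end Digit

section Support

variable {ι : Type*} {β : ι → Type*}

/-- A vector differing from `z` exactly at the coordinates in `I` is determined by those
coordinates. -/
def equivPiNe [DecidableEq ι] (z : ∀ i, β i) (I : Finset ι) :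
    {v : ∀ i, β i // ∀ i, v i = z i ↔ i ∉ I} ≃ ∀ i : I, {x : β i // x ≠ z i} where
  toFun v i := ⟨v.1 i, fun h => (v.2 i).1 h i.2⟩
  invFun w := ⟨fun i => if h : i ∈ I then w ⟨i, h⟩ else z i, fun i => by
    by_cases h : i ∈ I
    · simpa [h] using (w ⟨i, h⟩).2
    · simp [h]⟩
  left_inv v := by
    refine Subtype.ext (funext fun i => ?_)
    by_cases h : i ∈ I
    · simp [h]
    · simp [h, (v.2 i).2 h]
  right_inv w := by
    funext i
    simp

/-- The elements of `Fin N` below the top one. -/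
def finNeTopEquiv {N : ℕ} [NeZero N] : {x : Fin N // x ≠ ⊤} ≃ Fin (N - 1) where
  toFun x := ⟨x, by have := fin_eq_top_iff_val_eq.not.1 x.2; omega⟩
  invFun y := ⟨⟨y, by omega⟩, fin_eq_top_iff_val_eq.not.2 y.2.ne⟩
  left_inv _ := rfl
  right_inv _ := rfl

end Support

section DigitFunction

variable {q n : ℕ} {ι : Type*} {s : ι → ZMod n}

lemma sum_nsmul_eq_sum_subtype [NeZero q] [Fintype ι] {I : Finset ι}
    {v : ∀ i, Fin (q ^ cosetSize q (s i))} (hv : ∀ i, v i = ⊤ ↔ i ∉ I) :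
    ∑ i, (v i : ℕ) • s i = ∑ i : I, (v i : ℕ) • s i := by
  rw [Finset.sum_coe_sort I fun i => (v i : ℕ) • s i]
  refine (Finset.sum_subset I.subset_univ fun i _ hi => ?_).symm
  rw [fin_eq_top_iff_val_eq.1 ((hv i).2 hi), pow_cosetSize_sub_one_nsmul]

variable [NeZero n]

namespace IsCosetTransversal

/-- Reads the values of `f` along each cyclotomic coset as the base-`q` digits of a number. -/
noncomputable def digitEquiv (hs : IsCosetTransversal q s) (hqn : q.Coprime n) :
    (ZMod n → Fin q) ≃ ∀ i, Fin (q ^ cosetSize q (s i)) :=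
  (Equiv.arrowCongr (hs.equiv hqn).symm (Equiv.refl (Fin q))).trans <|
    (Equiv.piCurry fun _ _ => Fin q).trans (Equiv.piCongrRight fun _ => finFunctionFinEquiv)

lemma digitEquiv_apply (hs : IsCosetTransversal q s) (hqn : q.Coprime n) (f : ZMod n → Fin q)
    (i : ι) : hs.digitEquiv hqn f i = finFunctionFinEquiv fun j => f (hs.equiv hqn ⟨i, j⟩) := rfl

lemma sum_mul_eq_sum_digitEquiv_nsmul [Fintype ι] (hs : IsCosetTransversal q s)
    (hqn : q.Coprime n) (f : ZMod n → Fin q) :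
    ∑ z : ZMod n, z * ((f z : ℕ) : ZMod n) = ∑ i, (hs.digitEquiv hqn f i : ℕ) • s i := by
  rw [← (hs.equiv hqn).sum_comp, Fintype.sum_sigma]
  refine Finset.sum_congr rfl fun i _ => ?_
  rw [digitEquiv_apply, finFunctionFinEquiv_apply, nsmul_eq_mul, Nat.cast_sum, Finset.sum_mul]
  refine Finset.sum_congr rfl fun j _ => ?_
  rw [equiv_apply, Nat.cast_mul, Nat.cast_pow]
  ring

lemma digitEquiv_eq_top_iff [NeZero q] (hs : IsCosetTransversal q s) (hqn : q.Coprime n)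
    {f : ZMod n → Fin q} {i : ι} : hs.digitEquiv hqn f i = ⊤ ↔
      ∀ z : ZMod n, (∃ j : ℕ, z = (q : ZMod n) ^ j * s i) → (f z : ℕ) = q - 1 := by
  rw [digitEquiv_apply, finFunctionFinEquiv_eq_top_iff]
  simp only [fin_eq_top_iff_val_eq]
  refine ⟨fun h z hz => ?_, fun h j => h _ ⟨j, hs.equiv_apply hqn i j⟩⟩
  obtain ⟨⟨i', j⟩, rfl⟩ := (hs.equiv hqn).surjective z
  obtain rfl := (hs _).unique hz ⟨j, hs.equiv_apply hqn i' j⟩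
  exact h j

end IsCosetTransversal

lemma card_digitFunctions_mul [Finite ι] (hq : 1 < q) (hs : IsCosetTransversal q s)
    (hqn : q.Coprime n) (I : Finset ι) :
    Nat.card {f : ZMod n → Fin q //
        (∑ z : ZMod n, z * ((f z : ℕ) : ZMod n) = 0) ∧
        ∀ i, ((∀ z : ZMod n,
          (∃ j : ℕ, z = (q : ZMod n) ^ j * s i) → (f z : ℕ) = q - 1) ↔ i ∉ I)} *
      Nat.card (AddSubgroup.closure (Set.range fun i : I => s i)) =
      ∏ i : I, (q ^ cosetSize q (s i) - 1) := by
  classical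
  have := Fintype.ofFinite ι
  have : NeZero q := ⟨(zero_lt_one.trans hq).ne'⟩
  have (i : I) : NeZero (q ^ cosetSize q (s i) - 1) :=
    ⟨(Nat.sub_pos_of_lt (Nat.one_lt_pow (cosetSize_pos hqn _).ne' hq)).ne'⟩
  rw [← card_weightedSum_eq_zero_mul fun i : I => pow_cosetSize_sub_one_nsmul (s i)]
  congr 1
  let reduce := (equivPiNe (fun i => (⊤ : Fin (q ^ cosetSize q (s i)))) I).trans
    (Equiv.piCongrRight fun _ => finNeTopEquiv)
  refine Nat.card_congr <| (Equiv.subtypeEquiv (hs.digitEquiv hqn)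
    (q := fun v => (∀ i, v i = ⊤ ↔ i ∉ I) ∧ ∑ i, (v i : ℕ) • s i = 0) fun f => ?_).trans <|
    (Equiv.subtypeSubtypeEquivSubtypeInter _ _).symm.trans <|
    Equiv.subtypeEquiv reduce fun v => ?_
  · simp only [hs.digitEquiv_eq_top_iff, hs.sum_mul_eq_sum_digitEquiv_nsmul hqn, and_comm]
  · rw [sum_nsmul_eq_sum_subtype v.2]
    rfl

end DigitFunction

section RootOfUnity

lemma pow_pow_eq_one_s7 {M : Type*} [Monoid M] {x : M} {n : ℕ} (hx : x ^ n = 1) (k : ℕ) :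
    (x ^ k) ^ n = 1 := by
  rw [pow_right_comm, hx, one_pow]

lemma primitiveRoot_pow_eq_pow_iff {M : Type*} [CommMonoid M] {n : ℕ} [NeZero n] {ω : M}
    (hω : IsPrimitiveRoot ω n) {a b : ℕ} : ω ^ a = ω ^ b ↔ (a : ZMod n) = b := by
  rw [(hω.isOfFinOrder (NeZero.ne n)).pow_eq_pow_iff_modEq, ← hω.eq_orderOf,
    ZMod.natCast_eq_natCast_iff]

end RootOfUnity

section FrobeniusFixed

variable (F K : Type*) [Field F] [Fintype F] [Field K] [Algebra F K]

lemma frobeniusAlgHom_pow_apply_s7 (d : ℕ) (t : K) :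
    (FiniteField.frobeniusAlgHom F K ^ d) t = t ^ Fintype.card F ^ d := by
  rw [AlgHom.coe_pow, FiniteField.coe_frobeniusAlgHom, pow_iterate]

/-- The elements of `K` fixed by the `d`-th power of the Frobenius of `F`. When `K` is
algebraically closed and `0 < d`, this is the subfield of `K` of degree `d` over `F`. -/
noncomputable def frobFixed (d : ℕ) : Subalgebra F K :=
  AlgHom.equalizer (FiniteField.frobeniusAlgHom F K ^ d) (AlgHom.id F K)

variable {F K} in
lemma mem_frobFixed {d : ℕ} {t : K} : t ∈ frobFixed F K d ↔ t ^ Fintype.card F ^ d = t := by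
  rw [frobFixed, AlgHom.mem_equalizer, frobeniusAlgHom_pow_apply_s7, AlgHom.id_apply]

lemma card_frobFixed [IsAlgClosed K] {d : ℕ} (hd : 0 < d) :
    Nat.card (frobFixed F K d) = Fintype.card F ^ d := by
  classical
  obtain ⟨p, hp⟩ := CharP.exists F
  have hpd : p ∣ Fintype.card F ^ d :=
    dvd_pow ((CharP.cast_eq_zero_iff F p _).1 (FiniteField.cast_card_eq_zero F)) hd.ne'
  have hsep : ((X : F[X]) ^ Fintype.card F ^ d - X).Separable := galois_poly_separable p _ hpd
  have hroot (t : K) : t ∈ frobFixed F K d ↔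
      t ∈ ((X : F[X]) ^ Fintype.card F ^ d - X).rootSet K := by
    rw [mem_frobFixed, mem_rootSet_of_ne hsep.ne_zero]
    simp [sub_eq_zero]
  rw [Nat.card_congr (Equiv.subtypeEquivRight hroot), Nat.card_eq_fintype_card,
    card_rootSet_eq_natDegree hsep (IsAlgClosed.splits _),
    FiniteField.X_pow_card_pow_sub_X_natDegree_eq F hd.ne' Fintype.one_lt_card]

lemma finite_frobFixed [IsAlgClosed K] {d : ℕ} (hd : 0 < d) : Finite (frobFixed F K d) :=
  Nat.finite_of_card_ne_zero <| by
    rw [card_frobFixed F K hd]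
    exact pow_ne_zero _ Fintype.card_ne_zero

lemma card_frobFixed_ne_zero [IsAlgClosed K] {d : ℕ} (hd : 0 < d) :
    Nat.card {t : frobFixed F K d // t ≠ 0} = Fintype.card F ^ d - 1 := by
  have := finite_frobFixed F K hd
  rw [← card_frobFixed F K hd, ← Set.ncard_singleton (0 : frobFixed F K d), ← Set.ncard_compl]
  rfl

end FrobeniusFixed

namespace Qring

variable {F : Type} [Field F] {n : ℕ}

section Evaluation

variable {A B : Type*} [CommRing A] [Algebra F A] [CommRing B] [Algebra F B]

/-- Evaluation of the classes of polynomials modulo `X ^ n - 1` at an `x` with `x ^ n = 1`. -/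
noncomputable def evalAt (x : A) (hx : x ^ n = 1) : Qring F n →ₐ[F] A :=
  AdjoinRoot.liftAlgHom _ (Algebra.ofId F A) x (by simp [hx])

lemma evalAt_mk (x : A) (hx : x ^ n = 1) (p : F[X]) :
    evalAt x hx (AdjoinRoot.mk _ p) = aeval x p :=
  AdjoinRoot.liftAlgHom_mk _ _ _ _ _

lemma evalAt_Xbar (x : A) (hx : x ^ n = 1) : evalAt x hx (Xbar F n) = x :=
  AdjoinRoot.liftAlgHom_root _ _ _ _

lemma map_evalAt (φ : A →ₐ[F] B) (x : A) (hx : x ^ n = 1) (α : Qring F n) :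
    φ (evalAt x hx α) = evalAt (φ x) (by rw [← map_pow, hx, map_one]) α := by
  obtain ⟨p, rfl⟩ := AdjoinRoot.mk_surjective α
  rw [evalAt_mk, evalAt_mk, aeval_algHom_apply]

lemma Pbar_dvd_iff (x : AlgebraicClosure F) (hx : x ^ n = 1) (α : Qring F n) :
    Pbar F n x ∣ α ↔ evalAt x hx α = 0 := by
  refine ⟨?_, fun hα => ?_⟩
  · rintro ⟨β, rfl⟩
    rw [map_mul, Pbar, evalAt_mk, minpoly.aeval, zero_mul]
  · obtain ⟨p, rfl⟩ := AdjoinRoot.mk_surjective α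
    exact map_dvd _ (minpoly.dvd F x (by rwa [evalAt_mk] at hα))

end Evaluation

lemma eq_zero_of_evalAt_eq_zero [NeZero n] {K : Type*} [Field K] [Algebra F K] {ω : K}
    (hω : IsPrimitiveRoot ω n) {α : Qring F n}
    (hα : ∀ (x : K) (hx : x ^ n = 1), evalAt x hx α = 0) : α = 0 := by
  obtain ⟨p, rfl⟩ := AdjoinRoot.mk_surjective α
  rw [AdjoinRoot.mk_eq_zero, ← map_dvd_map' (algebraMap F K), Polynomial.map_sub,
    Polynomial.map_pow, map_X, Polynomial.map_one, X_pow_sub_one_eq_prod (NeZero.pos n) hω]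
  refine Finset.prod_dvd_of_coprime
    ((pairwise_coprime_X_sub_C Function.injective_id).set_pairwise _) fun x hx => ?_
  rw [dvd_iff_isRoot, IsRoot.def, eval_map_algebraMap]
  exact (evalAt_mk x _ p).symm.trans
    (hα x ((mem_nthRootsFinset (NeZero.pos n) (1 : K)).1 hx))

lemma natCard_eq [Fintype F] [NeZero n] : Nat.card (Qring F n) = Fintype.card F ^ n := by
  have hmonic : ((X : F[X]) ^ n - 1).Monic := by
    simpa using monic_X_pow_sub_C (1 : F) (NeZero.ne n)
  have hdegree : ((X : F[X]) ^ n - 1).natDegree = n := by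
    simpa using natDegree_X_pow_sub_C (n := n) (r := (1 : F))
  have : Module.Finite F (Qring F n) := (AdjoinRoot.powerBasis' hmonic).finite
  rw [Module.natCard_eq_pow_finrank (K := F), (AdjoinRoot.powerBasis' hmonic).finrank,
    AdjoinRoot.powerBasis'_dim, hdegree, Nat.card_eq_fintype_card]

section FourierTransform

variable [Fintype F] [NeZero n] {K : Type*} [Field K] [Algebra F K] {ω : K}
  {ι : Type*} {s : ι → ℕ}

lemma evalAt_pow_mem_frobFixed (hω : IsPrimitiveRoot ω n) (k : ℕ) (α : Qring F n) :
    evalAt (ω ^ k) (pow_pow_eq_one_s7 hω.pow_eq_one k) α ∈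
      frobFixed F K (cosetSize (Fintype.card F) (k : ZMod n)) := by
  set φ := FiniteField.frobeniusAlgHom F K ^ cosetSize (Fintype.card F) (k : ZMod n) with hφ
  have hfix : φ (ω ^ k) = ω ^ k := by
    rw [hφ, frobeniusAlgHom_pow_apply_s7, ← pow_mul, primitiveRoot_pow_eq_pow_iff hω, Nat.cast_mul,
      Nat.cast_pow, mul_comm, pow_cosetSize_mul]
  rw [frobFixed, AlgHom.mem_equalizer, ← hφ, map_evalAt]
  simp only [hfix, AlgHom.id_apply]

/-- The discrete Fourier transform: evaluation at the roots of unity `ω ^ s i`, which represent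
the cyclotomic cosets when `s` is a transversal. -/
noncomputable def dft (hω : IsPrimitiveRoot ω n) (s : ι → ℕ) (α : Qring F n) (i : ι) :
    frobFixed F K (cosetSize (Fintype.card F) (s i : ZMod n)) :=
  ⟨_, evalAt_pow_mem_frobFixed hω (s i) α⟩

lemma eq_zero_of_evalAt_pow_eq_zero (hω : IsPrimitiveRoot ω n)
    (hs : IsCosetTransversal (Fintype.card F) fun i => (s i : ZMod n)) {α : Qring F n}
    (hα : ∀ i, evalAt (ω ^ s i) (pow_pow_eq_one_s7 hω.pow_eq_one (s i)) α = 0) : α = 0 := by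
  refine eq_zero_of_evalAt_eq_zero hω fun x hx => ?_
  obtain ⟨k, -, rfl⟩ := hω.eq_pow_of_pow_eq_one hx
  obtain ⟨i, ⟨j, hj⟩, -⟩ := hs k
  have hconj : ω ^ k = (FiniteField.frobeniusAlgHom F K ^ j) (ω ^ s i) := by
    rw [frobeniusAlgHom_pow_apply_s7, ← pow_mul, primitiveRoot_pow_eq_pow_iff hω, hj]
    push_cast
    ring
  simp only [hconj]
  rw [← map_evalAt _ _ (pow_pow_eq_one_s7 hω.pow_eq_one _), hα i, map_zero]

lemma dft_injective (hω : IsPrimitiveRoot ω n)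
    (hs : IsCosetTransversal (Fintype.card F) fun i => (s i : ZMod n)) :
    Function.Injective (dft (F := F) hω s) := fun α β h => by
  refine sub_eq_zero.1 (eq_zero_of_evalAt_pow_eq_zero hω hs fun i => ?_)
  rw [map_sub, sub_eq_zero]
  exact congrArg Subtype.val (congrFun h i)

lemma dft_bijective [IsAlgClosed K] [Finite ι] (hω : IsPrimitiveRoot ω n)
    (hs : IsCosetTransversal (Fintype.card F) fun i => (s i : ZMod n))
    (hqn : (Fintype.card F).Coprime n) : Function.Bijective (dft (F := F) hω s) := by
  have := Fintype.ofFinite ι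
  have hpos (i : ι) := cosetSize_pos hqn (s i : ZMod n)
  have (i : ι) := finite_frobFixed F K (hpos i)
  refine (Nat.bijective_iff_injective_and_card _).2 ⟨dft_injective hω hs, ?_⟩
  rw [natCard_eq, Nat.card_pi, Finset.prod_congr rfl fun i _ => card_frobFixed F K (hpos i),
    Finset.prod_pow_eq_pow_sum, hs.sum_cosetSize hqn]

end FourierTransform

section Necklace

variable [NeZero n] {ω : AlgebraicClosure F} {ι : Type*} {s : ι → ℕ} {I : Finset ι}
  {α : Qring F n}

lemma Pbar_dvd_Xbar_mul_iff (hω : IsPrimitiveRoot ω n) (k : ℕ) :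
    Pbar F n (ω ^ k) ∣ Xbar F n * α ↔ Pbar F n (ω ^ k) ∣ α := by
  have hroot := pow_pow_eq_one_s7 hω.pow_eq_one k
  rw [Pbar_dvd_iff _ hroot, Pbar_dvd_iff _ hroot, map_mul, evalAt_Xbar,
    mul_eq_zero_iff_left (pow_ne_zero _ (hω.ne_zero (NeZero.ne n)))]

variable [Fintype F]

lemma card_Pbar_dvd_iff_notMem [Finite ι] (hω : IsPrimitiveRoot ω n)
    (hs : IsCosetTransversal (Fintype.card F) fun i => (s i : ZMod n))
    (hqn : (Fintype.card F).Coprime n) :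
    Nat.card {α : Qring F n // ∀ i, (Pbar F n (ω ^ s i) ∣ α ↔ i ∉ I)} =
      ∏ i : I, (Fintype.card F ^ cosetSize (Fintype.card F) (s i : ZMod n) - 1) := by
  classical
  have hdft (α : Qring F n) (i : ι) : Pbar F n (ω ^ s i) ∣ α ↔ dft hω s α i = 0 :=
    (Pbar_dvd_iff _ _ α).trans (Subalgebra.coe_eq_zero _ (x := dft hω s α i))
  rw [Nat.card_congr <| (Equiv.subtypeEquiv (.ofBijective _ (dft_bijective hω hs hqn))
    fun α => forall_congr' fun i => iff_congr (hdft α i) Iff.rfl).trans (equivPiNe 0 I),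
    Nat.card_pi]
  exact Finset.prod_congr rfl fun i _ => card_frobFixed_ne_zero F _ (cosetSize_pos hqn _)

lemma Xbar_pow_smul_eq_iff (hω : IsPrimitiveRoot ω n)
    (hs : IsCosetTransversal (Fintype.card F) fun i => (s i : ZMod n))
    (hα : ∀ i, Pbar F n (ω ^ s i) ∣ α ↔ i ∉ I) {k : ℕ} :
    Xbar F n ^ k • α = α ↔ ∀ i ∈ I, k • (s i : ZMod n) = 0 := by
  have hcoord (i : ι) : dft hω s (Xbar F n ^ k • α) i = dft hω s α i ↔
      (i ∈ I → k • (s i : ZMod n) = 0) := by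
    have hroot := pow_pow_eq_one_s7 hω.pow_eq_one (s i)
    have hzero : evalAt (ω ^ s i) hroot α = 0 ↔ i ∉ I := (Pbar_dvd_iff _ hroot α).symm.trans (hα i)
    have hpow : (ω ^ s i) ^ k = 1 ↔ k • (s i : ZMod n) = 0 := by
      rw [← pow_mul, ← pow_zero ω, primitiveRoot_pow_eq_pow_iff hω, Nat.cast_mul, Nat.cast_zero,
        mul_comm, nsmul_eq_mul]
    rw [← hpow, Subtype.ext_iff]
    simp only [dft, smul_eq_mul, map_mul, map_pow, evalAt_Xbar]
    rw [mul_left_eq_self₀, hzero, imp_iff_not_or, or_comm]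
  exact (dft_injective hω hs).eq_iff.symm.trans (funext_iff.trans (forall_congr' hcoord))

lemma period_Xbar (hω : IsPrimitiveRoot ω n)
    (hs : IsCosetTransversal (Fintype.card F) fun i => (s i : ZMod n))
    (hα : ∀ i, Pbar F n (ω ^ s i) ∣ α ↔ i ∉ I) :
    MulAction.period (Xbar F n) α =
      Nat.card (AddSubgroup.closure (Set.range fun i : I => (s i : ZMod n))) := by
  refine Nat.dvd_right_iff_eq.1 fun k => ?_
  rw [← MulAction.pow_smul_eq_iff_period_dvd, Xbar_pow_smul_eq_iff hω hs hα, card_closure_dvd_iff]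
  simp

end Necklace

end Qring

/-- For `q` a prime power coprime to `n` and every `I ⊆ {1,…,m}`, the set `N_I` of
necklaces (orbits of `Q = F_q[X]/(X^n-1)` under multiplication by `X`) whose elements are
divisible by `P_i` exactly for `i ∉ I` has the same cardinality as the set `F_I` of
functions `f : ZMod n → {0,…,q-1}` with `∑ z, z·f(z) ≡ 0 (mod n)` taking the value `q-1`
on all of `S_i` exactly for `i ∉ I`. -/
theorem N_I_card_eq_F_I_card
    (q n : ℕ) (hq : IsPrimePow q) (hn : 0 < n) [NeZero n] (hqn : Nat.Coprime q n)
    (F : Type) [Field F] [Fintype F] (hF : Fintype.card F = q)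
    (ω : AlgebraicClosure F) (hω : IsPrimitiveRoot ω n)
    (m : ℕ) (s : Fin m → ℕ)
    (hS : ∀ z : ZMod n, ∃! i : Fin m, ∃ j : ℕ, z = (q : ZMod n) ^ j * (s i : ZMod n)) :
    ∀ I : Finset (Fin m),
      Nat.card {c : Quotient (rotSetoid (Xbar F n)) |
          ∃ α : Qring F n, Quotient.mk (rotSetoid (Xbar F n)) α = c ∧
            ∀ i, (Pbar F n (ω ^ (s i)) ∣ α ↔ i ∉ I)} =
      Nat.card {f : ZMod n → Fin q //
          (∑ z : ZMod n, z * ((f z : ℕ) : ZMod n) = 0) ∧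
          ∀ i, ((∀ z : ZMod n,
              (∃ j : ℕ, z = (q : ZMod n) ^ j * (s i : ZMod n)) → (f z : ℕ) = q - 1)
            ↔ i ∉ I)} := by
  subst hF
  intro I
  have hs : IsCosetTransversal (Fintype.card F) fun i => (s i : ZMod n) := hS
  have hstab (α : Qring F n) (hα : ∀ i, Pbar F n (ω ^ s i) ∣ α ↔ i ∉ I) (i : Fin m) :
      Pbar F n (ω ^ s i) ∣ Xbar F n * α ↔ i ∉ I :=
    (Qring.Pbar_dvd_Xbar_mul_iff hω (s i)).trans (hα i)
  refine Nat.eq_of_mul_eq_mul_right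
    (Nat.card_pos (α := AddSubgroup.closure (Set.range fun i : I => (s i : ZMod n)))) ?_
  rw [card_necklaces_mul Nat.card_pos hstab fun α hα => Qring.period_Xbar hω hs hα,
    Qring.card_Pbar_dvd_iff_notMem hω hs hqn]
  exact (card_digitFunctions_mul Fintype.one_lt_card hs hqn I).symm
end
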